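/- For every integer g ≥ 2, the determinant of the (6g−3)×(6g−3) integer matrix M_g described in the context equals −2^{4g−3}. -/

import Mathlib

/-! The intersection matrix `M_g` of the two pants decompositions `P` and `Q`,
together with the curve around the puncture, with the edges of the preferred
ideal triangulation of a genus `g` surface with one puncture.

Columns (0-indexed positions, in order): the group `H₁` of 4 columns, the column
`B₁`; then for each `i = 2, …, g-1`: the column `Fᵢ`, the group `Hᵢ` of 4 columns,
the column `Bᵢ`; finally the group `H_g` of 4 columns.  A column is encoded by a
pair `(j, t)` where `j` is the handle index and `t = 0` for `F_j`, `t ∈ {1,2,3,4}`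
for the four columns of `H_j`, and `t = 5` for `B_j`.

Rows (in order): for `i = 1, …, g-1` the rows `Aᵢ, B'ᵢ, Eᵢ, Sᵢ, Kᵢ`, followed
(when `i ≥ 2`) by `C_{i-1}`; then `A_g, B'_g, C_{g-1}` and the last row `D`. -/

/-- A length-4 row vector read at positions `t = 1, 2, 3, 4` (and `0` elsewhere). -/
def vecEnt (w1 w2 w3 w4 : ℤ) : ℕ → ℤ
  | 1 => w1
  | 2 => w2
  | 3 => w3
  | 4 => w4
  | _ => 0

/-- Decode column position `c` into `(handle index, column type)`:
type `0` is `F`, types `1,…,4` are the four `H` columns, type `5` is `B`. -/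
def colDesc (g c : ℕ) : ℕ × ℕ :=
  if c < 4 then (1, c + 1)
  else if c = 4 then (1, 5)
  else if c < 6 * g - 7 then ((c - 5) / 6 + 2, (c - 5) % 6)
  else (g, c - (6 * g - 7) + 1)

/-- Row `Aᵢ`: the vector `a⃗ = (1,1,0,1)` in the column group `Hᵢ`. -/
def entryA (i j t : ℕ) : ℤ := if j = i then vecEnt 1 1 0 1 t else 0

/-- Row `B'ᵢ`: the vector `b⃗ = (1,0,1,1)` in `Hᵢ`. -/
def entryB' (i j t : ℕ) : ℤ := if j = i then vecEnt 1 0 1 1 t else 0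

/-- Row `Eᵢ`: `2` in `Fᵢ`, `e⃗ = (3,2,1,1)` in `Hᵢ`, `2` in `Bᵢ`, `2` in `Fᵢ₊₁`,
and `b⃗` in `Hᵢ₊₁`. -/
def entryE (i j t : ℕ) : ℤ :=
  if j = i then (if t = 0 then 2 else if t = 5 then 2 else vecEnt 3 2 1 1 t)
  else if j = i + 1 then (if t = 0 then 2 else vecEnt 1 0 1 1 t)
  else 0

/-- Row `Sᵢ`: `2` in every column of `H_j`, `B_j`, `F_j` for `j ≤ i`,
`2` in `Fᵢ₊₁`, and `b⃗` in `Hᵢ₊₁`. -/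
def entryS (i j t : ℕ) : ℤ :=
  if j ≤ i then 2
  else if j = i + 1 then (if t = 0 then 2 else vecEnt 1 0 1 1 t)
  else 0

/-- Row `Kᵢ`: `a⃗` in `H_j` for `j = 1, …, i+1`, `2` in `B_j` for `j = 1, …, i`,
and `2` in `F_j` for `j = 2, …, i+1`. -/
def entryK (i j t : ℕ) : ℤ :=
  if j ≤ i then (if t = 0 then 2 else if t = 5 then 2 else vecEnt 1 1 0 1 t)
  else if j = i + 1 then (if t = 0 then 2 else vecEnt 1 1 0 1 t)
  else 0

/-- Row `C_{m-1}` (with terminal handle `m`): `d⃗ = (3,3,2,1)` in `H₁`, `2` in `B₁`,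
then `4` in `F_j`, `f⃗ = (3,3,2,3)` in `H_j` and `2` in `B_j` for `j = 2, …, m-1`,
then `2` in `F_m` and `c⃗ = (1,1,2,3)` in `H_m`. -/
def entryC (m j t : ℕ) : ℤ :=
  if j = 1 then (if t = 5 then 2 else vecEnt 3 3 2 1 t)
  else if j < m then (if t = 0 then 4 else if t = 5 then 2 else vecEnt 3 3 2 3 t)
  else if j = m then (if t = 0 then 2 else vecEnt 1 1 2 3 t)
  else 0

/-- The `rr`-th row (`rr = 0,…,4` for `A, B', E, S, K`) of the block of handle `i`. -/
def blockEntry (i rr j t : ℕ) : ℤ :=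
  match rr with
  | 0 => entryA i j t
  | 1 => entryB' i j t
  | 2 => entryE i j t
  | 3 => entryS i j t
  | _ => entryK i j t

/-- The entry of row `r` of `M_g` in the column encoded by `(j, t)`. -/
def rowEntry (g r j t : ℕ) : ℤ :=
  if r < 5 then blockEntry 1 r j t
  else if r < 6 * g - 7 then
    (if (r - 5) % 6 < 5 then blockEntry ((r - 5) / 6 + 2) ((r - 5) % 6) j t
     else entryC ((r - 5) / 6 + 2) j t)
  else if r = 6 * g - 7 then entryA g j t
  else if r = 6 * g - 6 then entryB' g j t
  else if r = 6 * g - 5 then entryC g j t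
  else 2

/-- The `(6g-3) × (6g-3)` integer matrix `M_g` of intersection numbers of the curves
of the pants decompositions `P ∪ Q ∪ {∂₁}` with the edges of the preferred
triangulation of a genus `g` surface with one puncture. -/
def pantsMatrix (g : ℕ) : Matrix (Fin (6 * g - 3)) (Fin (6 * g - 3)) ℤ :=
  Matrix.of fun r c => rowEntry g r.val (colDesc g c.val).1 (colDesc g c.val).2

/-! Subtract `B'ᵢ₊₁` from `Eᵢ` and `Sᵢ`, and `Aᵢ₊₁` from `Kᵢ`: this removes their entries in
`Hᵢ₊₁`, and the only entries of the rows of handle `i` to the right of `Bᵢ` are then in the column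
`Fᵢ₊₁`, where they agree with those in the preceding column `Bᵢ`.  Subtracting each `B_{j-1}` from
`F_j` therefore leaves a block lower triangular matrix, whose diagonal blocks have determinant `-8`
(first handle), `16` (each of the `g - 2` middle handles) and `4` (last handle). -/

section Determinants

variable {R : Type*} [CommRing R]

theorem det_eq_of_sub_mem_span_rows_Ioi {n : Type*} [LinearOrder n] [Fintype n]
    {A B : Matrix n n R}
    (h : ∀ i, A.row i - B.row i ∈ Submodule.span R (B.row '' Set.Ioi i)) :
    A.det = B.det := by
  have hcomb : ∀ i, ∃ c : n → R, ∑ k with i < k, c k • B.row k = A.row i - B.row i := fun i ↦ by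
    rw [← Submodule.mem_span_image_finset_iff_exists_fun']
    simpa [Set.Ioi] using h i
  choose c hc using hcomb
  let N : Matrix n n R := .of fun i k ↦ if i < k then c i k else 0
  have hA : A = (1 + N) * B := by
    ext i j
    have hij : ∑ k, N i k * B k j = A i j - B i j := by
      simpa [N, Finset.sum_filter] using congrFun (hc i) j
    rw [add_mul, one_mul, Matrix.add_apply, Matrix.mul_apply, hij, add_sub_cancel]
  have hN : (1 + N).det = 1 := by
    rw [Matrix.det_of_isUpperTriangular fun i j hji ↦ ?_]
    · simp [N]
    · have hji : j < i := hji
      simp [N, Matrix.one_apply_ne hji.ne', hji.le]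
  rw [hA, Matrix.det_mul, hN, one_mul]

/-- The principal submatrix of the infinite matrix `f` on the indices `a, …, a + n - 1`. -/
def window (f : ℕ → ℕ → R) (a n : ℕ) : Matrix (Fin n) (Fin n) R :=
  Matrix.of fun i j ↦ f (a + i) (a + j)

theorem det_window_add {f : ℕ → ℕ → R} {a p q : ℕ}
    (h : ∀ i < p, ∀ j < q, f (a + i) (a + p + j) = 0) :
    (window f a (p + q)).det = (window f a p).det * (window f (a + p) q).det := by
  let C : Matrix (Fin q) (Fin p) R := .of fun i j ↦ f (a + p + i) (a + j)
  rw [← Matrix.det_fromBlocks_zero₁₂ _ C,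
    ← Matrix.det_submatrix_equiv_self (finSumFinEquiv (m := p) (n := q))]
  congr 1
  ext (i | i) (j | j)
  · simp [window]
  · simpa [window, add_assoc] using h i i.2 j j.2
  · simp [window, C, add_assoc]
  · simp [window, add_assoc]

theorem det_window_mul {f : ℕ → ℕ → R} {a p m : ℕ}
    (h : ∀ i < p * m, ∀ j < p * m, i / p < j / p → f (a + i) (a + j) = 0) :
    (window f a (p * m)).det = ∏ k ∈ Finset.range m, (window f (a + p * k) p).det := by
  induction m with
  | zero => simp
  | succ m ih =>
    rw [mul_add_one] at h ⊢
    rw [det_window_add, ih, Finset.prod_range_succ]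
    · exact fun i hi j hj ↦ h i (by omega) j (by omega)
    · intro i hi j hj
      have hdiv : i / p < (p * m + j) / p :=
        calc i / p
          _ < m := Nat.div_lt_of_lt_mul hi
          _ ≤ m + j / p := Nat.le_add_right m _
          _ = (p * m + j) / p := (Nat.mul_add_div (by omega) m j).symm
      rw [add_assoc]
      exact h i (by omega) _ (by omega) hdiv

end Determinants

/-- The slot `0, …, 5` (for `A, B', E, S, K, C`) of the row in position `r`, for `r` before the rows
of the last handle; the handle index of that row is `(r + 1) / 6 + 1`. -/
def rowSlot (r : ℕ) : ℕ :=
  if r < 5 then r else (r - 5) % 6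

/-- The row in slot `s` of handle `i`, after the row operations that clear its entries in the
group `H_{i+1}`. -/
def reducedBlockEntry (i s : ℕ) : ℕ → ℕ → ℤ :=
  match s with
  | 0 => entryA i
  | 1 => entryB' i
  | 2 => entryE i - entryB' (i + 1)
  | 3 => entryS i - entryB' (i + 1)
  | 4 => entryK i - entryA (i + 1)
  | _ => entryC i

/-- Row `r` of `M_g` after the row operations. -/
def reducedRow (g r : ℕ) : ℕ → ℕ → ℤ :=
  if r < 6 * g - 7 then reducedBlockEntry ((r + 1) / 6 + 1) (rowSlot r) else rowEntry g r

/-- The effect on a row `x` of subtracting, for every `j`, the column `B_{j-1}` from `F_j`. -/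
def colReduce (x : ℕ → ℕ → ℤ) (j t : ℕ) : ℤ :=
  if t = 0 then x j 0 - x (j - 1) 5 else x j t

/-- The entries of `M_g` after the row and the column operations. -/
def reducedEntry (g r c : ℕ) : ℤ :=
  colReduce (reducedRow g r) (colDesc g c).1 (colDesc g c).2

theorem rowEntry_eq_blockEntry {g r : ℕ} (hr : r < 6 * g - 7) (hs : rowSlot r < 5) :
    rowEntry g r = blockEntry ((r + 1) / 6 + 1) (rowSlot r) := by
  funext j t
  unfold rowSlot at hs ⊢
  split_ifs at hs ⊢ with h
  · rw [rowEntry, if_pos h, show (r + 1) / 6 + 1 = 1 by omega]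
  · rw [rowEntry, if_neg h, if_pos hr, if_pos hs, show (r + 1) / 6 + 1 = (r - 5) / 6 + 2 by omega]

theorem rowEntry_eq_entryC {g r : ℕ} (hr : r < 6 * g - 7) (hs : rowSlot r = 5) :
    rowEntry g r = entryC ((r + 1) / 6 + 1) := by
  funext j t
  unfold rowSlot at hs
  split_ifs at hs with h
  · omega
  · rw [rowEntry, if_neg h, if_pos hr, if_neg (by omega),
      show (r + 1) / 6 + 1 = (r - 5) / 6 + 2 by omega]

theorem rowEntry_eq_entryA {g i : ℕ} (hi : 0 < i) (hig : i < g) :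
    rowEntry g (6 * i - 1) = entryA (i + 1) := by
  rcases (Nat.succ_le_of_lt hig).lt_or_eq with h | rfl
  · have hs : rowSlot (6 * i - 1) = 0 := by grind [rowSlot]
    rw [rowEntry_eq_blockEntry (by omega) (by omega), hs, show (6 * i - 1 + 1) / 6 = i by omega]
    rfl
  · funext j t
    rw [rowEntry, if_neg (by omega), if_neg (by omega), if_pos (by omega)]

theorem rowEntry_eq_entryB' {g i : ℕ} (hi : 0 < i) (hig : i < g) :
    rowEntry g (6 * i) = entryB' (i + 1) := by
  rcases (Nat.succ_le_of_lt hig).lt_or_eq with h | rfl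
  · have hs : rowSlot (6 * i) = 1 := by grind [rowSlot]
    rw [rowEntry_eq_blockEntry (by omega) (by omega), hs, show (6 * i + 1) / 6 = i by omega]
    rfl
  · funext j t
    rw [rowEntry, if_neg (by omega), if_neg (by omega), if_neg (by omega), if_pos (by omega)]

theorem reducedRow_eq_or_exists_sub (g r : ℕ) :
    reducedRow g r = rowEntry g r ∨
      ∃ p, r < p ∧ p < 6 * g - 3 ∧ reducedRow g r = rowEntry g r - rowEntry g p := by
  by_cases hr : r < 6 * g - 7
  · have hA := rowEntry_eq_entryA (g := g) (i := (r + 1) / 6 + 1) (by omega) (by omega)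
    have hB := rowEntry_eq_entryB' (g := g) (i := (r + 1) / 6 + 1) (by omega) (by omega)
    have hs : rowSlot r < 6 := by grind [rowSlot]
    have hrow := rowEntry_eq_blockEntry hr
    have hrowC := rowEntry_eq_entryC hr
    rw [reducedRow, if_pos hr]
    generalize rowSlot r = s at *
    interval_cases s
    · exact .inl (hrow (by omega)).symm
    · exact .inl (hrow (by omega)).symm
    · exact .inr ⟨6 * ((r + 1) / 6 + 1), by omega, by omega, by rw [hB, hrow (by omega)]; rfl⟩
    · exact .inr ⟨6 * ((r + 1) / 6 + 1), by omega, by omega, by rw [hB, hrow (by omega)]; rfl⟩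
    · exact .inr ⟨6 * ((r + 1) / 6 + 1) - 1, by omega, by omega, by rw [hA, hrow (by omega)]; rfl⟩
    · exact .inl (hrowC rfl).symm
  · exact .inl (if_neg hr)

theorem det_of_reducedRow (g : ℕ) :
    (Matrix.of fun r c : Fin (6 * g - 3) ↦
      reducedRow g r (colDesc g c).1 (colDesc g c).2).det = (pantsMatrix g).det := by
  refine det_eq_of_sub_mem_span_rows_Ioi fun r ↦ ?_
  obtain h | ⟨p, hrp, hp, h⟩ := reducedRow_eq_or_exists_sub g r
  · convert Submodule.zero_mem _
    ext c
    simp [pantsMatrix, h]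
  · have hrow : (Matrix.of fun r c : Fin (6 * g - 3) ↦
        reducedRow g r (colDesc g c).1 (colDesc g c).2).row r - (pantsMatrix g).row r =
          -(pantsMatrix g).row ⟨p, hp⟩ := by
      ext c
      simp [pantsMatrix, h]
    rw [hrow]
    exact Submodule.neg_mem _
      (Submodule.subset_span (Set.mem_image_of_mem _ (show r < ⟨p, hp⟩ from hrp)))

theorem colDesc_eq_of_snd_succ_eq_zero {g c : ℕ} (h : (colDesc g (c + 1)).2 = 0) :
    colDesc g c = ((colDesc g (c + 1)).1 - 1, 5) := by
  grind [colDesc]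

theorem det_window_reducedEntry (g : ℕ) :
    (window (reducedEntry g) 0 (6 * g - 3)).det = (pantsMatrix g).det := by
  rw [← det_of_reducedRow]
  generalize 6 * g - 3 = n
  cases n with
  | zero => simp
  | succ n =>
    refine Matrix.det_eq_of_forall_col_eq_smul_add_pred
      (fun c ↦ if (colDesc g (c + 1)).2 = 0 then -1 else 0) (fun r ↦ ?_) fun r c ↦ ?_
    · simp [window, reducedEntry, colReduce, colDesc]
    · by_cases hF : (colDesc g (c + 1)).2 = 0
      · have hB := colDesc_eq_of_snd_succ_eq_zero hF
        simp [window, reducedEntry, colReduce, hF, hB, sub_eq_add_neg]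
      · simp [window, reducedEntry, colReduce, hF]

theorem colDesc_fst {g c : ℕ} (hc : c < 6 * g - 3) :
    (colDesc g c).1 = (c + 1) / 6 + 1 := by
  unfold colDesc
  split_ifs <;> omega

theorem reducedBlockEntry_eq_zero {i s j t : ℕ} (hij : i < j) (ht : t ≠ 0)
    (hs : 1 < i ∨ s < 5) : reducedBlockEntry i s j t = 0 := by
  rcases s with _ | _ | _ | _ | _ | s <;>
    simp only [reducedBlockEntry, Pi.sub_apply, entryA, entryB', entryE, entryS, entryK, entryC] <;>
    split_ifs <;> omega

theorem reducedBlockEntry_succ_zero {i s l : ℕ} (hil : i ≤ l)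
    (hs : 1 < i ∨ s < 5) : reducedBlockEntry i s (l + 1) 0 = reducedBlockEntry i s l 5 := by
  rcases s with _ | _ | _ | _ | _ | s <;>
    simp only [reducedBlockEntry, Pi.sub_apply, entryA, entryB', entryE, entryS, entryK, entryC,
      vecEnt, OfNat.ofNat_ne_zero, if_false] <;>
    split_ifs <;> omega

theorem colReduce_reducedBlockEntry_eq_zero {i s j : ℕ} (t : ℕ) (hij : i < j)
    (hs : 1 < i ∨ s < 5) : colReduce (reducedBlockEntry i s) j t = 0 := by
  obtain ⟨l, rfl⟩ : ∃ l, j = l + 1 := ⟨j - 1, by omega⟩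
  unfold colReduce
  split_ifs with ht
  · rw [reducedBlockEntry_succ_zero (by omega) hs, Nat.add_sub_cancel, sub_self]
  · exact reducedBlockEntry_eq_zero hij ht hs

theorem reducedEntry_eq_zero {g r c : ℕ} (hc : c < 6 * g - 3)
    (h : (r + 1) / 6 < (c + 1) / 6) : reducedEntry g r c = 0 := by
  rw [reducedEntry, colDesc_fst hc, reducedRow, if_pos (by omega)]
  exact colReduce_reducedBlockEntry_eq_zero _ (by omega) (by grind [rowSlot])

theorem det_window_reducedEntry_eq_mul {g : ℕ} (hg : 2 ≤ g) :
    (window (reducedEntry g) 0 (6 * g - 3)).det =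
      (window (reducedEntry g) 0 5).det *
        (∏ k ∈ Finset.range (g - 2), (window (reducedEntry g) (5 + 6 * k) 6).det) *
          (window (reducedEntry g) (6 * g - 7) 4).det := by
  have hsize : 6 * g - 3 = 5 + 6 * (g - 2) + 4 := by omega
  have hlast : 6 * g - 7 = 0 + (5 + 6 * (g - 2)) := by omega
  rw [hsize, hlast, det_window_add, det_window_add, det_window_mul, zero_add]
  · exact fun i _ j hj hij ↦ reducedEntry_eq_zero (by omega) (by omega)
  · exact fun i hi j hj ↦ reducedEntry_eq_zero (by omega) (by omega)
  · exact fun i hi j hj ↦ reducedEntry_eq_zero (by omega) (by omega)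

theorem det_window_reducedEntry_first {g : ℕ} (hg : 2 ≤ g) :
    (window (reducedEntry g) 0 5).det = -8 := by
  have hentry : ∀ s < 5, ∀ t < 5,
      reducedEntry g s t = colReduce (reducedBlockEntry 1 s) 1 (t + 1) := fun s hs t ht ↦ by
    have hcol : colDesc g t = (1, t + 1) := by grind [colDesc]
    rw [reducedEntry, hcol, reducedRow, if_pos (by omega), rowSlot, if_pos hs,
      show (s + 1) / 6 + 1 = 1 by omega]
  have hblock : window (reducedEntry g) 0 5 =
      !![1, 1, 0, 1, 0;
         1, 0, 1, 1, 0;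
         3, 2, 1, 1, 2;
         2, 2, 2, 2, 2;
         1, 1, 0, 1, 2] := by
    ext i j
    rw [window, Matrix.of_apply, zero_add, zero_add, hentry i i.2 j j.2]
    fin_cases i <;> fin_cases j <;>
      simp [colReduce, reducedBlockEntry, entryA, entryB', entryE, entryS, entryK, vecEnt]
  rw [hblock]
  simp [Matrix.det_succ_row_zero, Fin.sum_univ_succ, Fin.succAbove]

theorem det_window_reducedEntry_middle {g k : ℕ} (hk : k < g - 2) :
    (window (reducedEntry g) (5 + 6 * k) 6).det = 16 := by
  have hentry : ∀ s < 6, ∀ t < 6, reducedEntry g (5 + 6 * k + s) (5 + 6 * k + t) =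
      colReduce (reducedBlockEntry (k + 2) s) (k + 2) t := fun s hs t ht ↦ by
    have hcol : colDesc g (5 + 6 * k + t) = (k + 2, t) := by grind [colDesc]
    have hslot : rowSlot (5 + 6 * k + s) = s := by grind [rowSlot]
    rw [reducedEntry, hcol, reducedRow, if_pos (by omega), hslot,
      show (5 + 6 * k + s + 1) / 6 + 1 = k + 2 by omega]
  have hblock : window (reducedEntry g) (5 + 6 * k) 6 =
      !![0, 1, 1, 0, 1, 0;
         0, 1, 0, 1, 1, 0;
         2, 3, 2, 1, 1, 2;
         0, 2, 2, 2, 2, 2;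
         0, 1, 1, 0, 1, 2;
         0, 1, 1, 2, 3, 0] := by
    ext i j
    rw [window, Matrix.of_apply, hentry i i.2 j j.2]
    fin_cases i <;> fin_cases j <;>
      simp [colReduce, reducedBlockEntry, entryA, entryB', entryE, entryS, entryK, entryC, vecEnt]
  rw [hblock]
  simp [Matrix.det_succ_row_zero, Fin.sum_univ_succ, Fin.succAbove]

theorem det_window_reducedEntry_last {g : ℕ} (hg : 2 ≤ g) :
    (window (reducedEntry g) (6 * g - 7) 4).det = 4 := by
  have hentry : ∀ s, ∀ t < 4, reducedEntry g (6 * g - 7 + s) (6 * g - 7 + t) =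
      rowEntry g (6 * g - 7 + s) g (t + 1) := fun s t ht ↦ by
    have hcol : colDesc g (6 * g - 7 + t) = (g, t + 1) := by grind [colDesc]
    rw [reducedEntry, hcol, reducedRow, if_neg (by omega), colReduce, if_neg (by omega)]
  have hA : ∀ t, rowEntry g (6 * g - 7) g t = vecEnt 1 1 0 1 t := by
    grind [rowEntry, entryA]
  have hB : ∀ t, rowEntry g (6 * g - 7 + 1) g t = vecEnt 1 0 1 1 t := by
    grind [rowEntry, entryB']
  have hC : ∀ t ≠ 0, rowEntry g (6 * g - 7 + 2) g t = vecEnt 1 1 2 3 t := by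
    grind [rowEntry, entryC]
  have hD : ∀ t, rowEntry g (6 * g - 7 + 3) g t = 2 := by
    grind [rowEntry]
  have hblock : window (reducedEntry g) (6 * g - 7) 4 =
      !![1, 1, 0, 1;
         1, 0, 1, 1;
         1, 1, 2, 3;
         2, 2, 2, 2] := by
    ext i j
    rw [window, Matrix.of_apply, hentry i j j.2]
    fin_cases i <;> fin_cases j <;> simp [hA, hB, hC, hD, vecEnt]
  rw [hblock]
  simp [Matrix.det_succ_row_zero, Fin.sum_univ_succ, Fin.succAbove]

/-- **Determinant of the change-of-basis matrix, one puncture.**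
For every integer `g ≥ 2`, the determinant of `M_g` equals `-2 ^ (4g - 3)`. -/
theorem det_pantsMatrix (g : ℕ) (hg : 2 ≤ g) :
    (pantsMatrix g).det = -2 ^ (4 * g - 3) := by
  have hmiddle : ∏ k ∈ Finset.range (g - 2), (window (reducedEntry g) (5 + 6 * k) 6).det =
      16 ^ (g - 2) := by
    rw [Finset.prod_congr rfl fun k hk ↦ det_window_reducedEntry_middle (Finset.mem_range.mp hk),
      Finset.prod_const, Finset.card_range]
  have hexp : 4 * g - 3 = 4 * (g - 2) + 5 := by omega
  calc (pantsMatrix g).det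
    _ = (window (reducedEntry g) 0 (6 * g - 3)).det := (det_window_reducedEntry g).symm
    _ = -8 * 16 ^ (g - 2) * 4 := by
      rw [det_window_reducedEntry_eq_mul hg, det_window_reducedEntry_first hg, hmiddle,
        det_window_reducedEntry_last hg]
    _ = -2 ^ (4 * g - 3) := by
      rw [hexp, pow_add, pow_mul]
      norm_num
      ring
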